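/- Let m ∈ ℕ with m ≥ 1, let α ∈ ℝ, and let n ≥ m. Then the polynomial identity (d/dx)L^{I,(α)}_{m,n}(x) = −L_m^{(α−1)}(−x) · L_{n−m−1}^{(α+1)}(x) + L_{m−1}^{(α+1)}(−x) · L_{n−m}^{(α−1)}(x) holds for all x. -/

import Mathlib

open Finset

/-- Generalized binomial coefficient `C(t, j) = t(t-1)⋯(t-j+1)/j!`. -/
noncomputable def genBinom (t : ℝ) (j : ℕ) : ℝ :=
  (∏ i ∈ Finset.range j, (t - i)) / (Nat.factorial j)

/-- Generalized Laguerre polynomial `L_n^{(α)}(x)`, with the convention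
`L_n^{(α)} = 0` for negative integer index `n`. -/
noncomputable def laguerre (α : ℝ) (n : ℤ) (x : ℝ) : ℝ :=
  if 0 ≤ n then
    ∑ k ∈ Finset.range (n.toNat + 1),
      ((-1 : ℝ) ^ k / (Nat.factorial k)) * genBinom ((n : ℝ) + α) (n.toNat - k) * x ^ k
  else 0

/-- Type-I exceptional `X_m`-Laguerre polynomial. -/
noncomputable def XLagI (m : ℕ) (α : ℝ) (n : ℕ) (x : ℝ) : ℝ :=
  laguerre α (m : ℤ) (-x) * laguerre (α - 1) ((n : ℤ) - m) x
    + laguerre (α - 1) (m : ℤ) (-x) * laguerre α ((n : ℤ) - m - 1) x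

theorem genBinom_pascal (t : ℝ) (j : ℕ) :
    genBinom (t + 1) (j + 1) = genBinom t (j + 1) + genBinom t j := by
  have h : ∏ i ∈ Finset.range (j + 1), (t + 1 - (i : ℝ))
      = (t + 1) * ∏ i ∈ Finset.range j, (t - (i : ℝ)) := by
    rw [Finset.prod_range_succ', mul_comm]
    congr 1
    · simp
    · refine Finset.prod_congr rfl fun i _ => ?_
      push_cast
      ring
  have hj : ((j : ℝ) + 1) ≠ 0 := by positivity
  have hf : ((Nat.factorial j : ℕ) : ℝ) ≠ 0 := by positivity
  unfold genBinom
  rw [h, Finset.prod_range_succ, Nat.factorial_succ]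
  push_cast
  field_simp
  ring

theorem laguerre_natCast (α : ℝ) (n : ℕ) (x : ℝ) :
    laguerre α (n : ℤ) x = ∑ k ∈ Finset.range (n + 1),
      ((-1 : ℝ) ^ k / (Nat.factorial k)) * genBinom ((n : ℝ) + α) (n - k) * x ^ k := by
  simp [laguerre]

theorem laguerre_neg (α : ℝ) (n : ℤ) (hn : n < 0) (x : ℝ) : laguerre α n x = 0 := by
  simp [laguerre, not_le.mpr hn]

theorem laguerre_contig (α : ℝ) (n : ℤ) (x : ℝ) :
    laguerre (α + 1) n x = laguerre α n x + laguerre (α + 1) (n - 1) x := by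
  rcases lt_or_ge n 0 with hn | hn
  · rw [laguerre_neg _ _ hn, laguerre_neg _ _ hn, laguerre_neg _ _ (by omega)]
    simp
  lift n to ℕ using hn
  cases n with
  | zero =>
    rw [laguerre_neg (α + 1) (((0 : ℕ) : ℤ) - 1) (by norm_num), laguerre_natCast,
      laguerre_natCast]
    simp [genBinom]
  | succ n =>
    have e : ((n + 1 : ℕ) : ℤ) - 1 = (n : ℤ) := by push_cast; ring
    rw [e, laguerre_natCast, laguerre_natCast, laguerre_natCast,
      Finset.sum_range_succ, Finset.sum_range_succ _ (n + 1), add_right_comm,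
      ← Finset.sum_add_distrib]
    congr 1
    · refine Finset.sum_congr rfl fun k hk => ?_
      have hk' : k ≤ n := Nat.lt_succ_iff.mp (Finset.mem_range.mp hk)
      have e1 : n + 1 - k = (n - k) + 1 := by omega
      have e2 : ((n + 1 : ℕ) : ℝ) + (α + 1) = (((n + 1 : ℕ) : ℝ) + α) + 1 := by ring
      have e3 : (n : ℝ) + (α + 1) = ((n + 1 : ℕ) : ℝ) + α := by push_cast; ring
      rw [e1, e2, e3, genBinom_pascal]
      ring
    · simp [genBinom]

theorem laguerre_hasDerivAt (α : ℝ) (n : ℤ) (x : ℝ) :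
    HasDerivAt (laguerre α n) (-laguerre (α + 1) (n - 1) x) x := by
  rcases lt_or_ge n 0 with hn | hn
  · have : laguerre α n = fun _ => 0 := funext fun y => laguerre_neg _ _ hn y
    rw [this, laguerre_neg _ _ (by omega), neg_zero]
    exact hasDerivAt_const x 0
  lift n to ℕ using hn
  rw [show laguerre α (n : ℤ) = fun y => _ from funext fun y => laguerre_natCast α n y]
  have key := HasDerivAt.fun_sum (u := Finset.range (n + 1)) (x := x)
    (A := fun k y => ((-1 : ℝ) ^ k / (Nat.factorial k)) * genBinom ((n : ℝ) + α) (n - k) * y ^ k)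
    (A' := fun k => ((-1 : ℝ) ^ k / (Nat.factorial k)) * genBinom ((n : ℝ) + α) (n - k)
      * ((k : ℝ) * x ^ (k - 1)))
    (fun k _ => (hasDerivAt_pow k x).const_mul _)
  refine key.congr_deriv ?_
  rw [Finset.sum_range_succ']
  cases n with
  | zero => simp [laguerre]
  | succ n =>
    have e : ((n + 1 : ℕ) : ℤ) - 1 = (n : ℤ) := by push_cast; ring
    rw [e, laguerre_natCast, ← Finset.sum_neg_distrib]
    simp only [Nat.cast_zero, zero_mul, mul_zero, add_zero]
    refine Finset.sum_congr rfl fun k _ => ?_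
    have e1 : n + 1 - (k + 1) = n - k := by omega
    have e3 : (n : ℝ) + (α + 1) = ((n + 1 : ℕ) : ℝ) + α := by push_cast; ring
    have hj : ((k : ℝ) + 1) ≠ 0 := by positivity
    have hf : ((Nat.factorial k : ℕ) : ℝ) ≠ 0 := by positivity
    rw [e1, e3, Nat.factorial_succ, pow_succ, Nat.add_sub_cancel]
    push_cast
    field_simp

theorem stmt3 (m : ℕ) (hm : 1 ≤ m) (α : ℝ) (n : ℕ) (hmn : m ≤ n) :
    ∀ x : ℝ,
      deriv (XLagI m α n) x =
        -(laguerre (α - 1) (m : ℤ) (-x) * laguerre (α + 1) ((n : ℤ) - m - 1) x)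
          + laguerre (α + 1) ((m : ℤ) - 1) (-x) * laguerre (α - 1) ((n : ℤ) - m) x := by
  intro x
  have hneg : ∀ β : ℝ, HasDerivAt (fun y => laguerre β (m : ℤ) (-y))
      (laguerre (β + 1) ((m : ℤ) - 1) (-x)) x := fun β => by
    have h := (laguerre_hasDerivAt β (m : ℤ) (-x)).comp x (hasDerivAt_neg x)
    refine h.congr_deriv ?_
    ring
  have h := ((hneg α).mul (laguerre_hasDerivAt (α - 1) ((n : ℤ) - m) x)).add
    ((hneg (α - 1)).mul (laguerre_hasDerivAt α ((n : ℤ) - m - 1) x))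
  have h2 : deriv (XLagI m α n) x = _ := HasDerivAt.deriv h
  rw [h2]
  have c1 := laguerre_contig (α - 1) (m : ℤ) (-x)
  have c2 := laguerre_contig α ((n : ℤ) - m - 1) x
  simp only [sub_add_cancel] at c1 ⊢
  rw [c1, c2]
  ring
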